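/- Under the hypotheses [L_i, M_j] = d_{ij}·1 (scalars), the commutator of two symmetrized products is [Sym_l(L₁,…,L_l), Sym_m(M₁,…,M_m)] = Σ_{h odd, 1≤h≤min(l,m)} Σ_{I,J,π} 2^{1−h} d_{i₁ j_{π(1)}}⋯d_{i_h j_{π(h)}} Sym_{l+m−2h}(remaining L's and M's). In particular, only odd-order contractions contribute. -/

import Mathlib

/-- Commutator in an associative ring. -/
def brk {A : Type*} [Ring A] (a b : A) : A := a * b - b * a

/-- Symmetrized product of two elements. -/
def dia {A : Type*} [Ring A] [Algebra ℚ A] (a b : A) : A := (2⁻¹ : ℚ) • (a * b + b * a)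

/-- Fully symmetrized product of a list of elements: the average of the products
over all orderings of the list. -/
def symP {A : Type*} [Ring A] [Algebra ℚ A] (L : List A) : A :=
  ((L.length.factorial : ℚ)⁻¹) • ((L.permutations.map List.prod).sum)

/-! Both the product of two symmetrized products and the sum of all their partial contractions,
with weight `2⁻ʰ` on the `h`-fold ones, satisfy the same recursion, obtained by splitting off the
first factor in every ordering; hence they agree. The weight is forced by the recursion: expanding
an `h`-fold contraction once along each index on either side produces the same one-step sum twice.
Exchanging the two families replaces `d` by `-d` and so multiplies the `h`-fold contractions by
`(-1)ʰ`. In the commutator the even orders therefore cancel and the odd ones double. -/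

open Finset

section Commutator

variable {A ι : Type*} [Ring A]

lemma brk_mul_left (a b y : A) : brk (a * b) y = a * brk b y + brk a y * b := by
  simp only [brk]
  noncomm_ring

lemma brk_nsmul_left (n : ℕ) (a y : A) : brk (n • a) y = n • brk a y := by
  simp only [brk, smul_mul_assoc, mul_smul_comm, smul_sub]

lemma brk_sum_left (s : Finset ι) (f : ι → A) (y : A) :
    brk (∑ i ∈ s, f i) y = ∑ i ∈ s, brk (f i) y := by
  simp only [brk, sum_mul, mul_sum, sum_sub_distrib]

end Commutator

section SymmetrizedProduct

variable {A α β : Type*} [Ring A] [Algebra ℚ A]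

/-- The symmetrized product of the family `u` over the finite index set `S`. Indexing by a finset
instead of a list allows induction on the set of factors; the order given by `S.toList` does not
affect `symP`. -/
noncomputable def symOn (u : α → A) (S : Finset α) : A := symP (S.toList.map u)

lemma symP_eq_symOn {p : List A} {u : α → A} {S : Finset α}
    (h : (p : Multiset A) = S.val.map u) : symP p = symOn u S := by
  have hperm : p.Perm (S.toList.map u) := by
    rw [← Multiset.coe_eq_coe, h, ← Multiset.map_coe, coe_toList]
  rw [symOn, symP, symP, hperm.length_eq, (hperm.permutations.map _).sum_eq]

lemma symOn_eq_sum_lists (u : α → A) (S : Finset α) :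
    symOn u S = ((#S).factorial : ℚ)⁻¹ • (S.val.lists.map fun p => (p.map u).prod).sum := by
  rw [symOn, symP, List.length_map, length_toList, ← List.map_permutations, List.map_map,
    ← coe_toList S, Multiset.lists_coe, Multiset.map_coe, Multiset.sum_coe]
  rfl

lemma symOn_empty (u : α → A) : symOn u ∅ = 1 := by
  simp [symOn, symP]

lemma val_map_sumElim_disjSum {M : Type*} (u : α → M) (v : β → M) (S : Finset α) (T : Finset β) :
    (S.disjSum T).val.map (Sum.elim u v) = S.val.map u + T.val.map v := by
  simp [Multiset.map_disjSum]

lemma symOn_disjSum_comm (u : α → A) (v : β → A) (S : Finset α) (T : Finset β) :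
    symOn (Sum.elim v u) (T.disjSum S) = symOn (Sum.elim u v) (S.disjSum T) := by
  refine symP_eq_symOn ?_
  rw [← Multiset.map_coe, coe_toList, val_map_sumElim_disjSum, val_map_sumElim_disjSum, add_comm]

variable [DecidableEq α] [DecidableEq β]

lemma lists_val_eq_bind {S : Finset α} (hS : S.Nonempty) :
    S.val.lists = S.val.bind fun i => (S.erase i).val.lists.map (List.cons i) := by
  refine (Multiset.Nodup.ext (Multiset.lists_nodup_finset S) ?_).2 fun p => ?_
  · refine Multiset.nodup_bind.2 ⟨fun i _ =>
      (Multiset.lists_nodup_finset _).map List.cons_injective, ?_⟩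
    refine S.nodup.pairwise fun i _ j _ hij => ?_
    simp only [Function.onFun, Multiset.disjoint_left, Multiset.mem_map]
    rintro _ ⟨p, -, rfl⟩ ⟨q, -, hq⟩
    exact hij (List.cons.inj hq).1.symm
  · cases p with
    | nil => simp [hS.ne_empty]
    | cons a q =>
      simp only [Multiset.mem_bind, Multiset.mem_map, Multiset.mem_lists_iff, erase_val,
        List.cons.injEq]
      constructor
      · exact fun h => ⟨a, by simp [h], q, by simp [h], rfl, rfl⟩
      · rintro ⟨i, hi, q, h, rfl, rfl⟩
        simpa using (Multiset.cons_erase hi).symm.trans (congrArg (i ::ₘ ·) h)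

lemma card_nsmul_symOn (u : α → A) (S : Finset α) :
    #S • symOn u S = ∑ i ∈ S, u i * symOn u (S.erase i) := by
  rcases S.eq_empty_or_nonempty with rfl | hS
  · simp
  have hfac : (#S : ℚ) * ((#S).factorial : ℚ)⁻¹ = ((#S - 1).factorial : ℚ)⁻¹ := by
    have hne : (#S : ℚ) ≠ 0 := by exact_mod_cast hS.card_pos.ne'
    rw [← Nat.mul_factorial_pred hS.card_pos.ne', Nat.cast_mul, mul_inv,
      mul_inv_cancel_left₀ hne]
  rw [symOn_eq_sum_lists, ← Nat.cast_smul_eq_nsmul ℚ, smul_smul, hfac, lists_val_eq_bind hS,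
    Multiset.map_bind, Multiset.sum_bind, ← Finset.sum, smul_sum]
  refine sum_congr rfl fun i hi => ?_
  rw [symOn_eq_sum_lists, card_erase_of_mem hi, mul_smul_comm, Multiset.map_map,
    ← Multiset.sum_map_mul_left, erase_val]
  simp [Function.comp_def]

lemma card_add_card_nsmul_symOn_disjSum (u : α → A) (v : β → A) (S : Finset α) (T : Finset β) :
    (#S + #T) • symOn (Sum.elim u v) (S.disjSum T) =
      ∑ i ∈ S, u i * symOn (Sum.elim u v) ((S.erase i).disjSum T) +
        ∑ j ∈ T, v j * symOn (Sum.elim u v) (S.disjSum (T.erase j)) := by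
  have hl (i : α) : (S.disjSum T).erase (Sum.inl i) = (S.erase i).disjSum T := by
    ext (a | b) <;> simp
  have hr (j : β) : (S.disjSum T).erase (Sum.inr j) = S.disjSum (T.erase j) := by
    ext (a | b) <;> simp
  rw [← card_disjSum, card_nsmul_symOn, sum_disjSum]
  simp only [hl, hr, Sum.elim_inl, Sum.elim_inr]

variable {R : Type*} [CommSemiring R] [Algebra R A]

lemma brk_symOn_left (u : α → A) (y : A) (c : α → R)
    (hc : ∀ i, brk (u i) y = c i • (1 : A)) (S : Finset α) :
    brk (symOn u S) y = ∑ i ∈ S, c i • symOn u (S.erase i) := by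
  have := IsAddTorsionFree.of_module_rat A
  induction S using Finset.strongInduction with
  | H S ih =>
    rcases S.eq_empty_or_nonempty with rfl | hS
    · simp [symOn_empty, brk]
    refine nsmul_right_injective hS.card_pos.ne' ?_
    have hswap : ∑ i ∈ S, u i * ∑ k ∈ S.erase i, c k • symOn u ((S.erase i).erase k) =
        (#S - 1) • ∑ k ∈ S, c k • symOn u (S.erase k) := by
      simp only [mul_sum, mul_smul_comm, smul_sum]
      rw [sum_comm' (t' := S) (s' := S.erase) (by simp; tauto)]
      refine sum_congr rfl fun k hk => ?_
      rw [← card_erase_of_mem hk, smul_comm, card_nsmul_symOn, smul_sum]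
      exact sum_congr rfl fun i _ => by rw [erase_right_comm]
    calc #S • brk (symOn u S) y
        = ∑ i ∈ S, brk (u i * symOn u (S.erase i)) y := by
          rw [← brk_nsmul_left, card_nsmul_symOn, brk_sum_left]
      _ = ∑ i ∈ S, u i * ∑ k ∈ S.erase i, c k • symOn u ((S.erase i).erase k) +
            ∑ i ∈ S, c i • symOn u (S.erase i) := by
          rw [← sum_add_distrib]
          refine sum_congr rfl fun i hi => ?_
          rw [brk_mul_left, ih _ (erase_ssubset hi), hc, smul_one_mul]
      _ = #S • ∑ i ∈ S, c i • symOn u (S.erase i) := by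
          rw [hswap, ← succ_nsmul, Nat.sub_add_cancel hS.card_pos]

end SymmetrizedProduct

section Contraction

variable {R α β ι κ : Type*} [CommSemiring R] [DecidableEq α] [DecidableEq β]

/-- The sum over all complete contractions of `I` with `J`, that is, over all bijections
`π : I ≃ J`, of the product of the `d i (π i)`. -/
def contraction (d : α → β → R) (I : Finset α) (J : Finset β) : R :=
  ∑ π : I ≃ J, ∏ i : I, d i (π i)

lemma contraction_eq_zero_of_card_ne (d : α → β → R) {I : Finset α} {J : Finset β}
    (h : #I ≠ #J) : contraction d I J = 0 := by
  have : IsEmpty (I ≃ J) := ⟨fun π => h (by simpa using Fintype.card_congr π)⟩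
  exact Fintype.sum_empty _

lemma contraction_eq_sum_equiv [Fintype ι] [Fintype κ] [DecidableEq ι] [DecidableEq κ]
    (d : α → β → R) {I : Finset α} {J : Finset β} (e : ι ≃ I) (f : κ ≃ J) :
    contraction d I J = ∑ π : ι ≃ κ, ∏ r, d (e r) (f (π r)) :=
  Fintype.sum_equiv (e.equivCongr f).symm _ _ fun π =>
    Fintype.prod_equiv e.symm _ _ fun i => by simp

lemma contraction_empty (d : α → β → R) : contraction d ∅ ∅ = 1 := by
  rw [contraction_eq_sum_equiv d (Equiv.equivOfIsEmpty Empty _) (Equiv.equivOfIsEmpty Empty _)]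
  simp

lemma contraction_swap (d : α → β → R) (I : Finset α) (J : Finset β) :
    contraction (fun j i => d i j) J I = contraction d I J :=
  Fintype.sum_equiv ⟨Equiv.symm, Equiv.symm, fun _ => rfl, fun _ => rfl⟩ _ _ fun π =>
    Fintype.prod_equiv π _ _ fun j => by simp

lemma contraction_neg {R : Type*} [CommRing R] (d : α → β → R) (I : Finset α) (J : Finset β) :
    contraction (fun i j => -d i j) I J = (-1) ^ #I * contraction d I J := by
  simp [contraction, prod_neg, mul_sum]

lemma sum_option_equiv {M : Type*} [Fintype ι] [DecidableEq ι] [Fintype κ] [DecidableEq κ]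
    [AddCommMonoid M] (F : (Option ι ≃ κ) → M) :
    ∑ e, F e = ∑ k, ∑ e : ι ≃ {y // y ≠ k}, F ((Equiv.optionSubtype k).symm e).1 := by
  rw [← Fintype.sum_fiberwise (fun e : Option ι ≃ κ => e none)]
  exact Fintype.sum_congr _ _ fun k =>
    Fintype.sum_equiv (Equiv.optionSubtype k) _ _ fun e => by simp

lemma contraction_insert (d : α → β → R) {I : Finset α} {i : α} (hi : i ∉ I) (J : Finset β) :
    contraction d (insert i I) J = ∑ j ∈ J, d i j * contraction d I (J.erase j) := by
  let f (j : J) : {y : J // y ≠ j} ≃ J.erase j :=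
    (Equiv.subtypeEquivRight fun _ => Subtype.coe_injective.ne_iff.symm).trans <|
      (Equiv.subtypeSubtypeEquivSubtypeInter (· ∈ J) (· ≠ (j : β))).trans <|
        Equiv.subtypeEquivRight fun _ => by rw [mem_erase, and_comm]
  rw [contraction_eq_sum_equiv d (subtypeInsertEquivOption hi).symm (Equiv.refl J),
    sum_option_equiv, ← sum_coe_sort J]
  refine Fintype.sum_congr _ _ fun j => ?_
  rw [contraction_eq_sum_equiv d (Equiv.refl I) (f j), mul_sum]
  refine Fintype.sum_congr _ _ fun π => ?_
  rw [Fintype.prod_option]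
  simp [subtypeInsertEquivOption, f, Equiv.subtypeSubtypeEquivSubtypeInter]

lemma card_nsmul_contraction (d : α → β → R) (I : Finset α) (J : Finset β) :
    #I • contraction d I J = ∑ i ∈ I, ∑ j ∈ J, d i j * contraction d (I.erase i) (J.erase j) := by
  rw [← sum_const]
  refine sum_congr rfl fun i hi => ?_
  rw [← contraction_insert d (notMem_erase i I), insert_erase hi]

lemma card_add_card_nsmul_contraction (d : α → β → R) (I : Finset α) (J : Finset β) :
    (#I + #J) • contraction d I J =
      2 • ∑ i ∈ I, ∑ j ∈ J, d i j * contraction d (I.erase i) (J.erase j) := by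
  have hJ : #J • contraction d I J =
      ∑ i ∈ I, ∑ j ∈ J, d i j * contraction d (I.erase i) (J.erase j) := by
    rw [← contraction_swap, card_nsmul_contraction, sum_comm]
    simp only [contraction_swap d]
  rw [add_nsmul, card_nsmul_contraction, hJ, two_nsmul]

end Contraction

section SubsetSums

variable {M α β : Type*} [AddCommMonoid M]

lemma sum_powerset_sum_sdiff [DecidableEq α] (S : Finset α) (f : Finset α → α → M) :
    ∑ I ∈ S.powerset, ∑ i ∈ S \ I, f I i = ∑ i ∈ S, ∑ I ∈ (S.erase i).powerset, f I i :=
  sum_comm' fun I i => by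
    simp only [mem_powerset, mem_sdiff, subset_erase]
    tauto

lemma sum_powerset_sum_erase [DecidableEq α] (S : Finset α) (f : Finset α → α → M) :
    ∑ I ∈ S.powerset, ∑ i ∈ I, f (I.erase i) i =
      ∑ i ∈ S, ∑ I ∈ (S.erase i).powerset, f I i := by
  rw [sum_comm' (t' := S) (s' := fun i => S.powerset.filter (i ∈ ·))
    fun I i => by simp only [mem_powerset, mem_filter]; grind]
  refine sum_congr rfl fun i hi => ?_
  refine sum_nbij' (fun I => I.erase i) (fun I => insert i I) ?_ ?_ ?_ ?_ fun _ _ => rfl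
  all_goals simp only [mem_filter, mem_powerset]; grind

lemma sum_powerset_powerset_eq_sum_range (S : Finset α) (T : Finset β)
    (f : Finset α → Finset β → M) (hf : ∀ I J, #I ≠ #J → f I J = 0) :
    ∑ I ∈ S.powerset, ∑ J ∈ T.powerset, f I J =
      ∑ h ∈ range (min #S #T + 1), ∑ I ∈ powersetCard h S, ∑ J ∈ powersetCard h T, f I J := by
  have hinner (h : ℕ) (I) (hI : I ∈ powersetCard h S) :
      ∑ J ∈ T.powerset, f I J = ∑ J ∈ powersetCard h T, f I J := by
    rw [powersetCard_eq_filter, sum_filter_of_ne]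
    intro J _ hne
    by_contra hJ
    exact hne (hf I J (by grind))
  calc _ = ∑ h ∈ range (#S + 1), ∑ I ∈ powersetCard h S, ∑ J ∈ powersetCard h T, f I J := by
        rw [sum_powerset]
        exact sum_congr rfl fun h _ => sum_congr rfl (hinner h)
    _ = _ := by
        refine (sum_subset (range_mono (by omega)) fun h hS hmin => ?_).symm
        have hT : powersetCard h T = ∅ := powersetCard_eq_empty.2 (by grind)
        simp [hT]

end SubsetSums

section WickFormula

variable {A R α β : Type*} [Ring A] [Algebra ℚ A] [CommSemiring R] [Algebra R A]
  [DecidableEq α] [DecidableEq β] (u : α → A) (v : β → A) (d : α → β → R)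

/-- The term of the Wick formula for `symOn u S * symOn v T` in which `I ⊆ S` is contracted with
`J ⊆ T`. -/
noncomputable def wickTerm (S : Finset α) (T : Finset β) (I : Finset α) (J : Finset β) : A :=
  ((2 : ℚ) ^ #I)⁻¹ • contraction d I J • symOn (Sum.elim u v) ((S \ I).disjSum (T \ J))

/-- The right-hand side of the Wick formula for `symOn u S * symOn v T`: the sum over all partial
contractions. -/
noncomputable def wickSum (S : Finset α) (T : Finset β) : A :=
  ∑ I ∈ S.powerset, ∑ J ∈ T.powerset, wickTerm u v d S T I J

/-- The sum of all `h`-fold contractions of `symOn u S` with `symOn v T`, without the weight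
`2⁻ʰ`: it groups the terms of `wickSum` by their order. -/
noncomputable def contractedSum (S : Finset α) (T : Finset β) (h : ℕ) : A :=
  ∑ I ∈ powersetCard h S, ∑ J ∈ powersetCard h T,
    contraction d I J • symOn (Sum.elim u v) ((S \ I).disjSum (T \ J))

lemma wickSum_eq_sum_contractedSum (S : Finset α) (T : Finset β) :
    wickSum u v d S T =
      ∑ h ∈ range (min #S #T + 1), ((2 : ℚ) ^ h)⁻¹ • contractedSum u v d S T h := by
  rw [wickSum, sum_powerset_powerset_eq_sum_range]
  · refine sum_congr rfl fun h _ => ?_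
    simp only [contractedSum, smul_sum]
    refine sum_congr rfl fun I hI => ?_
    rw [← (mem_powersetCard.1 hI).2]
    simp only [wickTerm]
  · intro I J hIJ
    rw [wickTerm, contraction_eq_zero_of_card_ne d hIJ, zero_smul, smul_zero]

lemma card_add_card_nsmul_wickTerm_contracted (S : Finset α) (T : Finset β) (I : Finset α)
    (J : Finset β) :
    (#I + #J) • wickTerm u v d S T I J =
      ∑ i ∈ I, ∑ j ∈ J, d i j • wickTerm u v d (S.erase i) (T.erase j) (I.erase i) (J.erase j) := by
  have herase {i j} (hi : i ∈ I) (hj : j ∈ J) :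
      (S.erase i \ I.erase i).disjSum (T.erase j \ J.erase j) = (S \ I).disjSum (T \ J) := by
    congr 1 <;> grind
  have hpow {i} (hi : i ∈ I) : ((2 : ℚ) ^ #I)⁻¹ * 2 = ((2 : ℚ) ^ #(I.erase i))⁻¹ := by
    rw [← card_erase_add_one hi, pow_succ, mul_inv, inv_mul_cancel_right₀ two_ne_zero]
  calc (#I + #J) • wickTerm u v d S T I J
      = ((2 : ℚ) ^ #I)⁻¹ • ((#I + #J) • contraction d I J) •
          symOn (Sum.elim u v) ((S \ I).disjSum (T \ J)) := by
        rw [wickTerm, smul_comm, smul_assoc]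
    _ = (((2 : ℚ) ^ #I)⁻¹ * 2) • ∑ i ∈ I, ∑ j ∈ J,
          (d i j * contraction d (I.erase i) (J.erase j)) •
            symOn (Sum.elim u v) ((S \ I).disjSum (T \ J)) := by
        rw [card_add_card_nsmul_contraction, smul_assoc, mul_smul, sum_smul, ← Nat.cast_ofNat,
          Nat.cast_smul_eq_nsmul]
        simp only [sum_smul]
    _ = _ := by
        rw [smul_sum]
        refine sum_congr rfl fun i hi => ?_
        rw [smul_sum]
        refine sum_congr rfl fun j hj => ?_
        rw [wickTerm, herase hi hj, hpow hi, mul_smul, smul_comm]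

lemma card_add_card_nsmul_wickTerm {S : Finset α} {T : Finset β} {I : Finset α} {J : Finset β}
    (hI : I ⊆ S) (hJ : J ⊆ T) :
    (#S + #T) • wickTerm u v d S T I J =
      ∑ i ∈ S \ I, u i * wickTerm u v d (S.erase i) T I J +
      ∑ j ∈ T \ J, v j * wickTerm u v d S (T.erase j) I J +
      ∑ i ∈ I, ∑ j ∈ J, d i j • wickTerm u v d (S.erase i) (T.erase j) (I.erase i) (J.erase j) := by
  have hcard : #S + #T = (#(S \ I) + #(T \ J)) + (#I + #J) := by
    rw [← card_sdiff_add_card_eq_card hI, ← card_sdiff_add_card_eq_card hJ]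
    ring
  rw [hcard, add_nsmul, card_add_card_nsmul_wickTerm_contracted]
  congr 1
  simp only [wickTerm]
  rw [smul_comm, smul_comm (#(S \ I) + #(T \ J)), card_add_card_nsmul_symOn_disjSum]
  simp only [smul_add, smul_sum, mul_smul_comm, erase_sdiff_comm]

lemma card_add_card_nsmul_wickSum (S : Finset α) (T : Finset β) :
    (#S + #T) • wickSum u v d S T =
      ∑ i ∈ S, u i * wickSum u v d (S.erase i) T + ∑ j ∈ T, v j * wickSum u v d S (T.erase j) +
        ∑ i ∈ S, ∑ j ∈ T, d i j • wickSum u v d (S.erase i) (T.erase j) := by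
  have hleft : ∑ I ∈ S.powerset, ∑ J ∈ T.powerset, ∑ i ∈ S \ I,
      u i * wickTerm u v d (S.erase i) T I J = ∑ i ∈ S, u i * wickSum u v d (S.erase i) T := by
    simp only [sum_comm (s := T.powerset) (t := S \ _), sum_powerset_sum_sdiff, wickSum, mul_sum]
  have hright : ∑ I ∈ S.powerset, ∑ J ∈ T.powerset, ∑ j ∈ T \ J,
      v j * wickTerm u v d S (T.erase j) I J = ∑ j ∈ T, v j * wickSum u v d S (T.erase j) := by
    simp only [sum_powerset_sum_sdiff, wickSum, mul_sum]
    exact sum_comm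
  have hboth : ∑ I ∈ S.powerset, ∑ J ∈ T.powerset, ∑ i ∈ I, ∑ j ∈ J,
      d i j • wickTerm u v d (S.erase i) (T.erase j) (I.erase i) (J.erase j) =
        ∑ i ∈ S, ∑ j ∈ T, d i j • wickSum u v d (S.erase i) (T.erase j) := by
    calc _ = ∑ I ∈ S.powerset, ∑ i ∈ I, ∑ j ∈ T, ∑ J ∈ (T.erase j).powerset,
          d i j • wickTerm u v d (S.erase i) (T.erase j) (I.erase i) J := by
          refine sum_congr rfl fun I _ => sum_comm.trans <| sum_congr rfl fun i _ => ?_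
          exact sum_powerset_sum_erase T fun J j =>
            d i j • wickTerm u v d (S.erase i) (T.erase j) (I.erase i) J
      _ = ∑ i ∈ S, ∑ I ∈ (S.erase i).powerset, ∑ j ∈ T, ∑ J ∈ (T.erase j).powerset,
          d i j • wickTerm u v d (S.erase i) (T.erase j) I J :=
          sum_powerset_sum_erase S fun I i => ∑ j ∈ T, ∑ J ∈ (T.erase j).powerset,
            d i j • wickTerm u v d (S.erase i) (T.erase j) I J
      _ = _ := by
          simp only [wickSum, smul_sum]
          exact sum_congr rfl fun i _ => sum_comm
  rw [← hleft, ← hright, ← hboth, wickSum, smul_sum]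
  simp only [smul_sum, ← sum_add_distrib]
  exact sum_congr rfl fun I hI => sum_congr rfl fun J hJ =>
    card_add_card_nsmul_wickTerm u v d (mem_powerset.1 hI) (mem_powerset.1 hJ)

variable {u v d}

lemma card_add_card_nsmul_symOn_mul_symOn (hd : ∀ i j, brk (u i) (v j) = d i j • (1 : A))
    (S : Finset α) (T : Finset β) :
    (#S + #T) • (symOn u S * symOn v T) =
      ∑ i ∈ S, u i * (symOn u (S.erase i) * symOn v T) +
        ∑ j ∈ T, v j * (symOn u S * symOn v (T.erase j)) +
        ∑ i ∈ S, ∑ j ∈ T, d i j • (symOn u (S.erase i) * symOn v (T.erase j)) := by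
  have hcomm (j : β) : symOn u S * v j =
      v j * symOn u S + ∑ i ∈ S, d i j • symOn u (S.erase i) := by
    rw [← brk_symOn_left u (v j) (d · j) (hd · j), brk, add_sub_cancel]
  have hT : #T • (symOn u S * symOn v T) = ∑ j ∈ T, v j * (symOn u S * symOn v (T.erase j)) +
      ∑ i ∈ S, ∑ j ∈ T, d i j • (symOn u (S.erase i) * symOn v (T.erase j)) := by
    rw [← mul_smul_comm, card_nsmul_symOn, mul_sum, sum_comm, ← sum_add_distrib]
    simp only [← mul_assoc, hcomm, add_mul, sum_mul, smul_mul_assoc]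
  rw [add_nsmul, hT, ← smul_mul_assoc, card_nsmul_symOn, sum_mul, add_assoc]
  simp only [mul_assoc]

theorem symOn_mul_symOn (hd : ∀ i j, brk (u i) (v j) = d i j • (1 : A))
    (S : Finset α) (T : Finset β) : symOn u S * symOn v T = wickSum u v d S T := by
  have := IsAddTorsionFree.of_module_rat A
  induction hn : #S + #T using Nat.strong_induction_on generalizing S T with
  | _ n ih =>
    rcases Nat.eq_zero_or_pos n with rfl | hpos
    · obtain ⟨rfl, rfl⟩ : S = ∅ ∧ T = ∅ := by simpa using hn
      simp [wickSum, wickTerm, contraction_empty, symOn_empty]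
    refine nsmul_right_injective (hn ▸ hpos).ne' ?_
    have hS {i} (hi : i ∈ S) := card_erase_add_one hi
    have hT {j} (hj : j ∈ T) := card_erase_add_one hj
    beta_reduce
    rw [card_add_card_nsmul_symOn_mul_symOn hd, card_add_card_nsmul_wickSum]
    refine congrArg₂ _ (congrArg₂ _ ?_ ?_) ?_
    · exact sum_congr rfl fun i hi => by rw [ih _ (by grind) _ _ rfl]
    · exact sum_congr rfl fun j hj => by rw [ih _ (by grind) _ _ rfl]
    · exact sum_congr rfl fun i hi => sum_congr rfl fun j hj => by rw [ih _ (by grind) _ _ rfl]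

end WickFormula

section CommutatorFormula

variable {A R α β : Type*} [Ring A] [Algebra ℚ A] [CommRing R] [Algebra R A]
  [DecidableEq α] [DecidableEq β]

lemma contractedSum_neg_swap (u : α → A) (v : β → A) (d : α → β → R) (S : Finset α)
    (T : Finset β) (h : ℕ) :
    contractedSum v u (fun j i => -d i j) T S h = (-1 : ℤˣ) ^ h • contractedSum u v d S T h := by
  rw [contractedSum, sum_comm]
  simp only [contractedSum, smul_sum]
  refine sum_congr rfl fun I _ => sum_congr rfl fun J hJ => ?_
  rw [contraction_neg (fun j i => d i j), contraction_swap, symOn_disjSum_comm,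
    (mem_powersetCard.1 hJ).2, mul_smul]
  rcases h.even_or_odd with hh | hh <;> simp [hh.neg_one_pow]

theorem brk_symOn_symOn {u : α → A} {v : β → A} {d : α → β → R}
    (hd : ∀ i j, brk (u i) (v j) = d i j • (1 : A)) (S : Finset α) (T : Finset β) :
    brk (symOn u S) (symOn v T) =
      ∑ h ∈ range (min #S #T + 1) with Odd h,
        (2 * ((2 : ℚ) ^ h)⁻¹) • contractedSum u v d S T h := by
  have hd' (j i) : brk (v j) (u i) = (-d i j) • (1 : A) := by
    rw [neg_smul, ← hd i j, brk, brk, neg_sub]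
  rw [brk, symOn_mul_symOn hd, symOn_mul_symOn hd', wickSum_eq_sum_contractedSum,
    wickSum_eq_sum_contractedSum, min_comm, ← sum_sub_distrib, sum_filter]
  refine sum_congr rfl fun h _ => ?_
  rw [contractedSum_neg_swap]
  rcases h.even_or_odd with hh | hh
  · simp [hh.neg_one_pow, hh]
  · simp [hh.neg_one_pow, hh, ← two_smul ℚ, mul_smul]

end CommutatorFormula

section Fin

variable {A : Type*} [Ring A] [Algebra ℚ A] {l m : ℕ}

lemma symP_ofFn (L : Fin l → A) : symP (List.ofFn L) = symOn L univ :=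
  symP_eq_symOn <| by simp [← Fin.univ_val_map]

lemma symP_sort_append_sort (L : Fin l → A) (M : Fin m → A) (I : Finset (Fin l))
    (J : Finset (Fin m)) :
    symP ((I.sort (· ≤ ·)).map L ++ (J.sort (· ≤ ·)).map M) =
      symOn (Sum.elim L M) (I.disjSum J) :=
  symP_eq_symOn <| by
    rw [val_map_sumElim_disjSum, ← Multiset.coe_add, ← Multiset.map_coe, ← Multiset.map_coe,
      sort_eq, sort_eq]

end Fin

theorem stmt10_general {A R : Type*} [Ring A] [Algebra ℚ A] [CommRing R] [Algebra R A] {l m : ℕ}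
    (L : Fin l → A) (M : Fin m → A) (d : Fin l → Fin m → R)
    (hd : ∀ i j, brk (L i) (M j) = d i j • (1 : A)) :
    brk (symP (List.ofFn L)) (symP (List.ofFn M)) =
      ∑ h ∈ range (min l m + 1) with Odd h,
        ∑ I ∈ (powersetCard h (univ : Finset (Fin l))).attach,
          ∑ J ∈ (powersetCard h (univ : Finset (Fin m))).attach,
            ∑ π : Equiv.Perm (Fin h),
              (2 * ((2 : ℚ) ^ h)⁻¹) •
                (∏ r, d (I.1.orderIsoOfFin (mem_powersetCard.1 I.2).2 r)
                  (J.1.orderIsoOfFin (mem_powersetCard.1 J.2).2 (π r))) •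
                symP ((I.1ᶜ.sort (· ≤ ·)).map L ++ (J.1ᶜ.sort (· ≤ ·)).map M) := by
  rw [symP_ofFn, symP_ofFn, brk_symOn_symOn hd, card_fin, card_fin]
  refine sum_congr rfl fun h _ => ?_
  rw [contractedSum, ← sum_attach, smul_sum]
  refine sum_congr rfl fun I _ => ?_
  rw [← sum_attach, smul_sum]
  refine sum_congr rfl fun J _ => ?_
  let e := I.1.orderIsoOfFin (mem_powersetCard.1 I.2).2
  let f := J.1.orderIsoOfFin (mem_powersetCard.1 J.2).2
  rw [symP_sort_append_sort, compl_eq_univ_sdiff, compl_eq_univ_sdiff,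
    contraction_eq_sum_equiv d e.toEquiv f.toEquiv, sum_smul, smul_sum]
  rfl

open Finset in
theorem stmt10 {A : Type*} [Ring A] [Algebra ℚ A] {l m : ℕ}
    (L : Fin l → A) (M : Fin m → A) (d : Fin l → Fin m → ℚ)
    (hd : ∀ i j, brk (L i) (M j) = d i j • (1 : A)) :
    brk (symP (List.ofFn L)) (symP (List.ofFn M))
      = ∑ h ∈ (Finset.range (min l m + 1)).filter (fun h => Odd h),
          ∑ I ∈ (Finset.powersetCard h (Finset.univ : Finset (Fin l))).attach,
            ∑ J ∈ (Finset.powersetCard h (Finset.univ : Finset (Fin m))).attach,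
              ∑ π : Equiv.Perm (Fin h),
                ((2 : ℚ) * ((2 : ℚ) ^ h)⁻¹ *
                    ∏ r : Fin h,
                      d (I.1.orderIsoOfFin (Finset.mem_powersetCard.mp I.2).2 r)
                        (J.1.orderIsoOfFin (Finset.mem_powersetCard.mp J.2).2 (π r))) •
                  symP ((I.1ᶜ.sort (· ≤ ·)).map L ++ (J.1ᶜ.sort (· ≤ ·)).map M) := by
  simpa only [mul_smul] using stmt10_general L M d hd
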